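/- (Elliptic soliton solution of the lattice modified KP equation.) For generic α ∈ ℂ, set P_α = Φ_δ(α) = σ(α+δ)/(σ(δ)σ(α)), Q_α = Φ_ε(α), L_α = Φ_λ(α). Then the gauge variable 𝒱_α = Φ_ξ(α)·V_α satisfies, at every (n,m,h) ∈ ℤ³ where the denominators are nonzero, (P_α·𝒱̂_α − Q_α·𝒱̃_α)/𝒱̂̃_α + (Q_α·𝒱̄_α − L_α·𝒱̂_α)/𝒱̂̄_α + (L_α·𝒱̃_α − P_α·𝒱̄_α)/𝒱ّ̃̄_α = 0, where 𝒱̃_α, 𝒱̂_α, 𝒱̄_α denote 𝒱_α evaluated at (n+1,m,h), (n,m+1,h), (n,m,h+1), and 𝒱̂̃_α, 𝒱̂̄_α, 𝒱̃̄_α at (n+1,m+1,h), (n,m+1,h+1), (n+1,m,h+1). (The coefficients P_α, Q_α, L_α are the precise, gauge-exact values of p_α, q_α, l_α in the paper.) -/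

import Mathlib

open scoped BigOperators

noncomputable section

/-- A period lattice in `ℂ` spanned by two `ℝ`-independent periods. -/
structure EllLattice where
  ω₁ : ℂ
  ω₂ : ℂ
  indep : ∀ a b : ℝ, a • ω₁ + b • ω₂ = 0 → a = 0 ∧ b = 0

namespace EllLattice

/-- Membership in the lattice `Λ = ℤω₁ + ℤω₂`. -/
def mem (L : EllLattice) (z : ℂ) : Prop := ∃ m n : ℤ, z = m • L.ω₁ + n • L.ω₂

/-- The lattice point with integer coordinates `p = (m, n)`. -/
def per (L : EllLattice) (p : ℤ × ℤ) : ℂ := p.1 • L.ω₁ + p.2 • L.ω₂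

/-- The Weierstrass sigma function associated to the lattice, defined by its
Hadamard product over the nonzero lattice points. -/
def sigma (L : EllLattice) (z : ℂ) : ℂ :=
  z * ∏' p : {p : ℤ × ℤ // p ≠ 0},
      ((1 - z / L.per p.1) *
        Complex.exp (z / L.per p.1 + z ^ 2 / (2 * (L.per p.1) ^ 2)))

/-- The Weierstrass zeta function `ζ = σ′/σ`. -/
def zeta (L : EllLattice) (z : ℂ) : ℂ := deriv L.sigma z / L.sigma z

/-- The Weierstrass `℘`-function `℘ = −ζ′`. -/
def wp (L : EllLattice) (z : ℂ) : ℂ := - deriv L.zeta z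

/-- `Φ_ξ(κ) = σ(ξ+κ)/(σ(ξ)σ(κ))`. -/
def Phi (L : EllLattice) (ξ κ : ℂ) : ℂ := L.sigma (ξ + κ) / (L.sigma ξ * L.sigma κ)

/-- The Lamé function `Ψ_ξ(κ) = Φ_ξ(κ)·e^{−ζ(ξ)κ}`. -/
def Psi (L : EllLattice) (ξ κ : ℂ) : ℂ := L.Phi ξ κ * Complex.exp (-(L.zeta ξ) * κ)

/-- `η_δ(ξ) = ζ(ξ+δ) − ζ(ξ) − ζ(δ)`. -/
def eta (L : EllLattice) (δ ξ : ℂ) : ℂ := L.zeta (ξ + δ) - L.zeta ξ - L.zeta δ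

/-- `χ_{α,β}(ξ) = ζ(α) + ζ(β) + ζ(ξ) − ζ(ξ+α+β)`. -/
def chi (L : EllLattice) (α β ξ : ℂ) : ℂ :=
  L.zeta α + L.zeta β + L.zeta ξ - L.zeta (ξ + α + β)

end EllLattice

open Matrix

/-- All the data entering the elliptic (N,N′)-soliton solutions of the lattice KP system:
a period lattice, lattice parameters `δ, ε, λ`, a base point `ξ₀`, rapidity parameters
`κ_i, κ′_j`, initial plane-wave constants `ρ⁰_i, ν⁰_j` and a constant `N′×N` matrix `C`. -/
structure KPData (N N' : ℕ) where
  L : EllLattice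
  del : ℂ
  eps : ℂ
  lam : ℂ
  xi0 : ℂ
  κ : Fin N → ℂ
  κ' : Fin N' → ℂ
  ρ0 : Fin N → ℂ
  ν0 : Fin N' → ℂ
  C : Matrix (Fin N') (Fin N) ℂ

namespace KPData

variable {N N' : ℕ}

/-- `ξ = ξ₀ + nδ + mε + hλ`. -/
def xi (D : KPData N N') (n m h : ℤ) : ℂ :=
  D.xi0 + n • D.del + m • D.eps + h • D.lam

/-- The plane-wave factor `ρ_i(n,m,h)`. -/
def ρ (D : KPData N N') (i : Fin N) (n m h : ℤ) : ℂ :=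
  (Complex.exp (-(D.L.zeta D.del) * D.κ i) * D.L.Psi D.del (-(D.κ i))) ^ n *
  (Complex.exp (-(D.L.zeta D.eps) * D.κ i) * D.L.Psi D.eps (-(D.κ i))) ^ m *
  (Complex.exp (-(D.L.zeta D.lam) * D.κ i) * D.L.Psi D.lam (-(D.κ i))) ^ h *
  Complex.exp (D.L.zeta (D.xi n m h) * D.κ i) * D.ρ0 i

/-- The plane-wave factor `ν_j(n,m,h)`. -/
def ν (D : KPData N N') (j : Fin N') (n m h : ℤ) : ℂ :=
  (Complex.exp (D.L.zeta D.del * D.κ' j) * D.L.Psi D.del (D.κ' j)) ^ (-n) *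
  (Complex.exp (D.L.zeta D.eps * D.κ' j) * D.L.Psi D.eps (D.κ' j)) ^ (-m) *
  (Complex.exp (D.L.zeta D.lam * D.κ' j) * D.L.Psi D.lam (D.κ' j)) ^ (-h) *
  Complex.exp (D.L.zeta (D.xi n m h) * D.κ' j) * D.ν0 j

/-- The dressed elliptic Cauchy matrix `M_{ij} = ρ_i Ψ_ξ(κ_i + κ′_j) ν_j`. -/
def M (D : KPData N N') (n m h : ℤ) : Matrix (Fin N) (Fin N') ℂ :=
  Matrix.of fun i j => D.ρ i n m h * D.L.Psi (D.xi n m h) (D.κ i + D.κ' j) * D.ν j n m h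

/-- The column vector `r = (ρ_i Ψ_ξ(κ_i))_i`. -/
def r (D : KPData N N') (n m h : ℤ) : Fin N → ℂ :=
  fun i => D.ρ i n m h * D.L.Psi (D.xi n m h) (D.κ i)

/-- The column vector `s = (ν_j Ψ_ξ(κ′_j))_j`. -/
def s (D : KPData N N') (n m h : ℤ) : Fin N' → ℂ :=
  fun j => D.ν j n m h * D.L.Psi (D.xi n m h) (D.κ' j)

/-- The τ-function `τ = det(1 + MC)`. -/
def τ (D : KPData N N') (n m h : ℤ) : ℂ := (1 + D.M n m h * D.C).det

/-- The diagonal matrix `χ_{α,K}(ξ) = diag(χ_{α,κ_i}(ξ))`. -/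
def DK (D : KPData N N') (α : ℂ) (n m h : ℤ) : Matrix (Fin N) (Fin N) ℂ :=
  Matrix.diagonal fun i => D.L.chi α (D.κ i) (D.xi n m h)

/-- The diagonal matrix `χ_{β,K′}(ξ) = diag(χ_{β,κ′_j}(ξ))`. -/
def DK' (D : KPData N N') (β : ℂ) (n m h : ℤ) : Matrix (Fin N') (Fin N') ℂ :=
  Matrix.diagonal fun j => D.L.chi β (D.κ' j) (D.xi n m h)

/-- `W_β = 1 − sᵀ (χ_{β,K′}(ξ))⁻¹ C (1+MC)⁻¹ r`. -/
def W (D : KPData N N') (β : ℂ) (n m h : ℤ) : ℂ :=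
  1 - D.s n m h ⬝ᵥ ((D.DK' β n m h)⁻¹ *ᵥ (D.C *ᵥ ((1 + D.M n m h * D.C)⁻¹ *ᵥ D.r n m h)))

/-- `V_α = 1 − sᵀ (1+CM)⁻¹ C (χ_{α,K}(ξ))⁻¹ r`. -/
def V (D : KPData N N') (α : ℂ) (n m h : ℤ) : ℂ :=
  1 - D.s n m h ⬝ᵥ ((1 + D.C * D.M n m h)⁻¹ *ᵥ (D.C *ᵥ ((D.DK α n m h)⁻¹ *ᵥ D.r n m h)))

/-- `w₀ = sᵀ C (1+MC)⁻¹ r`. -/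
def w0 (D : KPData N N') (n m h : ℤ) : ℂ :=
  D.s n m h ⬝ᵥ (D.C *ᵥ ((1 + D.M n m h * D.C)⁻¹ *ᵥ D.r n m h))

/-- `w = ζ(ξ) − w₀ − nζ(δ) − mζ(ε) − hζ(λ)`. -/
def w (D : KPData N N') (n m h : ℤ) : ℂ :=
  D.L.zeta (D.xi n m h) - D.w0 n m h - n • D.L.zeta D.del - m • D.L.zeta D.eps -
    h • D.L.zeta D.lam

/-- `S_{β,α} = sᵀ (χ_{β,K′}(ξ))⁻¹ C (1+MC)⁻¹ (χ_{α,K}(ξ))⁻¹ r`. -/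
def S (D : KPData N N') (β α : ℂ) (n m h : ℤ) : ℂ :=
  D.s n m h ⬝ᵥ ((D.DK' β n m h)⁻¹ *ᵥ
    (D.C *ᵥ ((1 + D.M n m h * D.C)⁻¹ *ᵥ ((D.DK α n m h)⁻¹ *ᵥ D.r n m h))))

/-- `u_α = (1+MC)⁻¹ (χ_{α,K}(ξ))⁻¹ r`. -/
def u (D : KPData N N') (α : ℂ) (n m h : ℤ) : Fin N → ℂ :=
  (1 + D.M n m h * D.C)⁻¹ *ᵥ ((D.DK α n m h)⁻¹ *ᵥ D.r n m h)

/-- `u₀ = (1+MC)⁻¹ r`. -/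
def u0 (D : KPData N N') (n m h : ℤ) : Fin N → ℂ :=
  (1 + D.M n m h * D.C)⁻¹ *ᵥ D.r n m h

/-- the adjoint (row) vector `ᵗu_β = sᵀ (χ_{β,K′}(ξ))⁻¹ (1+CM)⁻¹`. -/
def tu (D : KPData N N') (β : ℂ) (n m h : ℤ) : Fin N' → ℂ :=
  (D.s n m h ᵥ* (D.DK' β n m h)⁻¹) ᵥ* (1 + D.C * D.M n m h)⁻¹

/-- the adjoint (row) vector `ᵗu₀ = sᵀ (1+CM)⁻¹`. -/
def tu0 (D : KPData N N') (n m h : ℤ) : Fin N' → ℂ :=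
  D.s n m h ᵥ* (1 + D.C * D.M n m h)⁻¹

/-- The gauge variable `𝒱_α = Φ_ξ(α)·V_α`. -/
def calV (D : KPData N N') (α : ℂ) (n m h : ℤ) : ℂ :=
  D.L.Phi (D.xi n m h) α * D.V α n m h

/-- The gauge variable `𝒲_β = Φ_ξ(β)·W_β`. -/
def calW (D : KPData N N') (β : ℂ) (n m h : ℤ) : ℂ :=
  D.L.Phi (D.xi n m h) β * D.W β n m h

/-- The Schwarzian variable `Z_{β,α} = Φ_ξ(α+β)·(1 − χ_{α,β}(ξ)·S_{β,α})`. -/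
def Z (D : KPData N N') (β α : ℂ) (n m h : ℤ) : ℂ :=
  D.L.Phi (D.xi n m h) (α + β) * (1 - D.L.chi α β (D.xi n m h) * D.S β α n m h)

/-- Genericity of the parameters (together with finitely many auxiliary points `extra`):
no nontrivial integer combination of `ξ₀, δ, ε, λ`, the rapidity parameters and the
auxiliary points lies on the lattice.  In particular all arguments of `σ` occurring in
the soliton solutions and their shifts lie outside `Λ`. -/
def Generic {P : ℕ} (D : KPData N N') (extra : Fin P → ℂ) : Prop :=
  ∀ (c0 cn cm ch : ℤ) (a : Fin N → ℤ) (b : Fin N' → ℤ) (e : Fin P → ℤ),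
    ¬ (c0 = 0 ∧ cn = 0 ∧ cm = 0 ∧ ch = 0 ∧ a = 0 ∧ b = 0 ∧ e = 0) →
    ¬ D.L.mem (c0 • D.xi0 + cn • D.del + cm • D.eps + ch • D.lam +
      (∑ i, a i • D.κ i) + (∑ j, b j • D.κ' j) + ∑ t, e t • extra t)

end KPData

/-!
The functions `Φ` satisfy the three-term σ-relation, obtained from Liouville's theorem: both sides
have the same quasi-periods, and their difference divided by a product of two σ-factors is entire
and doubly periodic, hence constant.

The exponentials in `ρ`, `ν` and `Ψ` cancel, which leaves matrices built from `Φ`. By the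
three-term relation, a shift by a lattice parameter `d` changes `1 + MC` by a matrix of rank one.
With `𝒱_d`, `𝒱_e`, `𝒱_de` the values of `𝒱_α` after the indicated shifts, this yields the linear
system

`Φ_d(α) 𝒱_e - Φ_e(α) 𝒱_d = 𝒱_de (g_d - g_e)`,

where `g_d` is `ζ(d)` plus the shifted potential `w₀ - ζ(ξ)`. After division by `𝒱_de`, the sum
over the three pairs of lattice parameters telescopes.
-/

open Filter Topology

/-- The Weierstrass elementary factor `E₂(u) = (1 - u) exp (u + u² / 2)` of genus two. -/
def weierstrassFactor (u : ℂ) : ℂ := (1 - u) * Complex.exp (u + u ^ 2 / 2)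

lemma weierstrassFactor_zero : weierstrassFactor 0 = 1 := by simp [weierstrassFactor]

lemma weierstrassFactor_eq_zero_iff {u : ℂ} : weierstrassFactor u = 0 ↔ u = 1 := by
  simp [weierstrassFactor, sub_eq_zero, eq_comm (a := u)]

@[fun_prop]
lemma differentiable_weierstrassFactor : Differentiable ℂ weierstrassFactor := by
  unfold weierstrassFactor
  fun_prop

lemma weierstrassFactor_eq_exp {u : ℂ} (hu : u ≠ 1) :
    weierstrassFactor u = Complex.exp (Complex.log (1 + -u) - Complex.logTaylor (2 + 1) (-u)) := by
  have hTaylor : Complex.logTaylor (2 + 1) (-u) = -(u + u ^ 2 / 2) := by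
    simp only [Complex.logTaylor, Finset.sum_range_succ, Finset.sum_range_zero]
    norm_num
    ring
  have hne : 1 + -u ≠ 0 := by
    rw [← sub_eq_add_neg]
    exact sub_ne_zero.2 hu.symm
  rw [hTaylor, sub_neg_eq_add, Complex.exp_add, Complex.exp_log hne, ← sub_eq_add_neg]
  rfl

lemma norm_weierstrassFactor_sub_one_le {u : ℂ} (hu : ‖u‖ ≤ 1 / 2) :
    ‖weierstrassFactor u - 1‖ ≤ 2 * ‖u‖ ^ 3 := by
  have hu1 : u ≠ 1 := by
    rintro rfl
    norm_num at hu
  have hlog : ‖Complex.log (1 + -u) - Complex.logTaylor (2 + 1) (-u)‖ ≤ ‖u‖ ^ 3 := by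
    have h := Complex.norm_log_sub_logTaylor_le 2 (z := -u) (by rw [norm_neg]; linarith)
    have hinv : (1 - ‖u‖)⁻¹ ≤ 2 := by
      rw [inv_le_comm₀ (by linarith) two_pos]
      linarith
    have hpow : 0 ≤ ‖u‖ ^ 3 := by positivity
    norm_num [norm_neg] at h ⊢
    nlinarith
  have hle_one : ‖u‖ ^ 3 ≤ 1 := pow_le_one₀ (norm_nonneg u) (by linarith)
  rw [weierstrassFactor_eq_exp hu1]
  exact (Complex.norm_exp_sub_one_le (hlog.trans hle_one)).trans (by linarith)

lemma logDeriv_weierstrassFactor {u : ℂ} (hu : u ≠ 1) :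
    logDeriv weierstrassFactor u = 1 + u + (u - 1)⁻¹ := by
  have hderiv : HasDerivAt weierstrassFactor
      (-1 * Complex.exp (u + u ^ 2 / 2) + (1 - u) * (Complex.exp (u + u ^ 2 / 2) * (1 + u))) u := by
    have hlin : HasDerivAt (fun z : ℂ => 1 - z) (-1) u := (hasDerivAt_id' u).const_sub 1
    have hquad : HasDerivAt (fun z : ℂ => z + z ^ 2 / 2) (1 + u) u := by
      simpa using (hasDerivAt_id' u).fun_add (((hasDerivAt_id' u).fun_pow 2).div_const 2)
    exact hlin.mul hquad.cexp
  have hne : weierstrassFactor u ≠ 0 := weierstrassFactor_eq_zero_iff.not.2 hu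
  have hsub : u - 1 ≠ 0 := sub_ne_zero.2 hu
  rw [logDeriv_apply, hderiv.deriv, div_eq_iff hne, weierstrassFactor]
  field_simp
  ring

lemma hasDerivAt_logDeriv_weierstrassFactor {u : ℂ} (hu : u ≠ 1) :
    HasDerivAt (logDeriv weierstrassFactor) (1 - 1 / (u - 1) ^ 2) u := by
  have hsub : u - 1 ≠ 0 := sub_ne_zero.2 hu
  have h : HasDerivAt (fun z : ℂ => 1 + z + (z - 1)⁻¹) (1 - 1 / (u - 1) ^ 2) u := by
    convert! ((hasDerivAt_id' u).const_add 1).add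
      (((hasDerivAt_id' u).sub_const 1).inv hsub) using 1
    ring
  refine h.congr_of_eventuallyEq ?_
  filter_upwards [isOpen_ne.mem_nhds hu] with z hz using logDeriv_weierstrassFactor hz

lemma hasDerivAt_logDeriv_weierstrassFactor_div {z ω : ℂ} (hω : ω ≠ 0) (hz : z ≠ ω) :
    HasDerivAt (logDeriv fun x => weierstrassFactor (x / ω))
      (-(1 / (z - ω) ^ 2 - 1 / ω ^ 2)) z := by
  have hlog : (logDeriv fun x => weierstrassFactor (x / ω)) =
      fun x => logDeriv weierstrassFactor (x / ω) * ω⁻¹ := by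
    funext x
    have hderiv : HasDerivAt (fun y => y / ω) ω⁻¹ x := by
      simpa only [one_div] using (hasDerivAt_id' x).div_const ω
    rw [← hderiv.deriv]
    exact logDeriv_comp (differentiable_weierstrassFactor _) hderiv.differentiableAt
  have hzω : z / ω ≠ 1 := by rwa [Ne, div_eq_one_iff_eq hω]
  rw [hlog]
  have hsub : z - ω ≠ 0 := sub_ne_zero.2 hz
  convert! ((hasDerivAt_logDeriv_weierstrassFactor hzω).comp z
    ((hasDerivAt_id' z).div_const ω)).mul_const ω⁻¹ using 1
  field_simp
  ring

lemma differentiable_dslope {f : ℂ → ℂ} (hf : Differentiable ℂ f) (z₀ : ℂ) :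
    Differentiable ℂ (dslope f z₀) :=
  differentiableOn_univ.1 ((Complex.differentiableOn_dslope univ_mem).2 hf.differentiableOn)

/-- The quotient `f / g`, with the value prescribed by l'Hôpital's rule at the zeros of `g`; it
extends `f / g` analytically over the simple zeros of `g` at which `f` vanishes. -/
def lhopitalQuotient (f g : ℂ → ℂ) (z : ℂ) : ℂ :=
  if g z = 0 then deriv f z / deriv g z else f z / g z

lemma differentiable_lhopitalQuotient {f g : ℂ → ℂ} (hf : Differentiable ℂ f)
    (hg : Differentiable ℂ g) (hzeros : ∀ z, g z = 0 → f z = 0 ∧ deriv g z ≠ 0) :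
    Differentiable ℂ (lhopitalQuotient f g) := by
  intro z₀
  by_cases hz₀ : g z₀ = 0
  · obtain ⟨hfz₀, hderiv⟩ := hzeros z₀ hz₀
    have hdf := differentiable_dslope hf z₀
    have hdg := differentiable_dslope hg z₀
    have hne : dslope g z₀ z₀ ≠ 0 := by rwa [dslope_same]
    refine ((hdf z₀).div (hdg z₀) hne).congr_of_eventuallyEq ?_
    filter_upwards [hdg.continuous.continuousAt.eventually_ne hne] with z hz
    rcases eq_or_ne z z₀ with rfl | hzz₀
    · simp [lhopitalQuotient, hz₀]
    · have hsub : z - z₀ ≠ 0 := sub_ne_zero.2 hzz₀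
      simp only [Pi.div_apply, dslope_of_ne _ hzz₀, slope_def_field, hfz₀, hz₀, sub_zero] at hz ⊢
      rw [lhopitalQuotient, if_neg (div_ne_zero_iff.1 hz).1, div_div_div_cancel_right₀ hsub]
  · refine ((hf z₀).div (hg z₀) hz₀).congr_of_eventuallyEq ?_
    filter_upwards [hg.continuous.continuousAt.eventually_ne hz₀] with z hz using if_neg hz

lemma deriv_comp_add_of_multiplier {f m : ℂ → ℂ} {w z : ℂ} (hf : Differentiable ℂ f)
    (hm : Differentiable ℂ m) (hfw : ∀ z, f (z + w) = m z * f z) :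
    deriv f (z + w) = deriv m z * f z + m z * deriv f z := by
  rw [← deriv_comp_add_const, funext hfw]
  exact deriv_fun_mul (hm z) (hf z)

lemma lhopitalQuotient_add {f g m : ℂ → ℂ} {w : ℂ} (hf : Differentiable ℂ f)
    (hg : Differentiable ℂ g) (hzeros : ∀ z, g z = 0 → f z = 0) (hm : Differentiable ℂ m)
    (hm0 : ∀ z, m z ≠ 0) (hfw : ∀ z, f (z + w) = m z * f z) (hgw : ∀ z, g (z + w) = m z * g z)
    (z : ℂ) : lhopitalQuotient f g (z + w) = lhopitalQuotient f g z := by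
  by_cases hz : g z = 0
  · rw [lhopitalQuotient, lhopitalQuotient, if_pos hz, if_pos (by rw [hgw, hz, mul_zero]),
      deriv_comp_add_of_multiplier hf hm hfw, deriv_comp_add_of_multiplier hg hm hgw, hz,
      hzeros z hz, mul_zero, zero_add, zero_add, mul_div_mul_left _ _ (hm0 z)]
  · rw [lhopitalQuotient, lhopitalQuotient, if_neg hz,
      if_neg (by rw [hgw]; exact mul_ne_zero (hm0 z) hz), hfw, hgw, mul_div_mul_left _ _ (hm0 z)]

/-- Liouville's theorem for the elliptic function `f / g`. -/
theorem eq_zero_of_multiplier (Λ : Submodule ℤ ℂ) [DiscreteTopology Λ] [IsZLattice ℝ Λ]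
    {f g : ℂ → ℂ} (hf : Differentiable ℂ f) (hg : Differentiable ℂ g)
    (hmult : ∀ w ∈ Λ, ∃ m : ℂ → ℂ, Differentiable ℂ m ∧ (∀ z, m z ≠ 0) ∧
      (∀ z, f (z + w) = m z * f z) ∧ ∀ z, g (z + w) = m z * g z)
    (hzeros : ∀ z, g z = 0 → f z = 0 ∧ deriv g z ≠ 0)
    {z₀ : ℂ} (hfz₀ : f z₀ = 0) (hgz₀ : g z₀ ≠ 0) : f = 0 := by
  have hdiff := differentiable_lhopitalQuotient hf hg hzeros
  have hperiodic (z w : ℂ) (hw : w ∈ Λ) :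
      lhopitalQuotient f g (z + w) = lhopitalQuotient f g z := by
    obtain ⟨m, hm, hm0, hfw, hgw⟩ := hmult w hw
    exact lhopitalQuotient_add hf hg (fun z hz => (hzeros z hz).1) hm hm0 hfw hgw z
  have hbounded : Bornology.IsBounded (Set.range (lhopitalQuotient f g)) :=
    (IsZLattice.isCompact_range_of_periodic Λ _ hdiff.continuous hperiodic).isBounded
  funext z
  by_cases hz : g z = 0
  · exact (hzeros z hz).1
  · have hconst := hdiff.apply_eq_apply_of_bounded hbounded z z₀
    rw [lhopitalQuotient, lhopitalQuotient, if_neg hz, if_neg hgz₀, hfz₀, zero_div] at hconst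
    exact (div_eq_zero_iff.1 hconst).resolve_right hz

namespace EllLattice

/-- The same lattice as a Mathlib `PeriodPair`, giving access to the theory of `℘`. -/
def toPeriodPair (L : EllLattice) : PeriodPair where
  ω₁ := L.ω₁
  ω₂ := L.ω₂
  indep := by
    rw [LinearIndependent.pair_iff]
    exact L.indep

/-- The lattice `Λ` as a `ℤ`-submodule of `ℂ`. -/
abbrev lattice (L : EllLattice) : Submodule ℤ ℂ := L.toPeriodPair.lattice

variable (L : EllLattice)

lemma mem_lattice {z : ℂ} : z ∈ L.lattice ↔ L.mem z := by
  rw [PeriodPair.mem_lattice]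
  simp only [mem, toPeriodPair, zsmul_eq_mul, eq_comm]

lemma exists_notMem_lattice : ∃ z, z ∉ L.lattice :=
  ⟨_, L.toPeriodPair.ω₁_div_two_notMem_lattice⟩

lemma isOpen_compl_lattice : IsOpen (L.lattice : Set ℂ)ᶜ :=
  L.toPeriodPair.isClosed_lattice.isOpen_compl

lemma countable_lattice : (L.lattice : Set ℂ).Countable :=
  L.toPeriodPair.latticeEquivProd.toEquiv.injective.countable.to_set

variable {L} in
lemma add_mem_lattice_iff {z w : ℂ} (hw : w ∈ L.lattice) : z + w ∈ L.lattice ↔ z ∈ L.lattice :=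
  L.lattice.toAddSubgroup.add_mem_cancel_right hw

variable {L} in
lemma ne_zero_of_notMem_lattice {z : ℂ} (hz : z ∉ L.lattice) : z ≠ 0 := by
  rintro rfl
  exact hz (zero_mem _)

lemma per_eq_latticeEquivProd_symm (p : ℤ × ℤ) :
    L.per p = L.toPeriodPair.latticeEquivProd.symm p := by
  rw [PeriodPair.latticeEquiv_symm_apply]
  simp [per, toPeriodPair]

lemma per_mem_lattice (p : ℤ × ℤ) : L.per p ∈ L.lattice := by
  rw [per_eq_latticeEquivProd_symm]
  exact Subtype.mem _

lemma exists_per_eq {z : ℂ} (hz : z ∈ L.lattice) : ∃ p, L.per p = z :=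
  ⟨L.toPeriodPair.latticeEquivProd ⟨z, hz⟩, by simp [per_eq_latticeEquivProd_symm]⟩

lemma per_eq_zero_iff {p : ℤ × ℤ} : L.per p = 0 ↔ p = 0 := by
  simp [per_eq_latticeEquivProd_symm]

lemma per_neg (p : ℤ × ℤ) : L.per (-p) = -L.per p := by
  simp [per_eq_latticeEquivProd_symm]

lemma per_ne_zero (p : {p : ℤ × ℤ // p ≠ 0}) : L.per p ≠ 0 :=
  L.per_eq_zero_iff.not.2 p.2

lemma summable_norm_per_pow_inv :
    Summable fun p : {p : ℤ × ℤ // p ≠ 0} => (‖L.per p‖ ^ 3)⁻¹ := by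
  have h := ZLattice.summable_norm_rpow L.lattice (-3)
    (by rw [PeriodPair.finrank_lattice]; norm_num)
  refine ((L.toPeriodPair.latticeEquivProd.symm.toEquiv.summable_iff.2 h).subtype _).congr
    fun p => ?_
  simp [per_eq_latticeEquivProd_symm]

/-- The Weierstrass product `σ(z) / z`, extended by its value `1` at the origin. -/
def sigmaProd (z : ℂ) : ℂ := ∏' p : {p : ℤ × ℤ // p ≠ 0}, weierstrassFactor (z / L.per p)

lemma sigma_eq_mul_sigmaProd (z : ℂ) : L.sigma z = z * L.sigmaProd z := by
  simp only [sigma, sigmaProd, weierstrassFactor]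
  congr! 6
  rw [div_pow, div_div, mul_comm]

lemma eventually_norm_weierstrassFactor_sub_one_le {r : ℝ} (hr : 0 < r) :
    ∀ᶠ p : {p : ℤ × ℤ // p ≠ 0} in cofinite, ∀ z ∈ Metric.ball (0 : ℂ) r,
      ‖weierstrassFactor (z / L.per p) - 1‖ ≤ 2 * r ^ 3 * (‖L.per p‖ ^ 3)⁻¹ := by
  have hsmall : ∀ᶠ p : {p : ℤ × ℤ // p ≠ 0} in cofinite,
      (‖L.per p‖ ^ 3)⁻¹ < ((2 * r) ^ 3)⁻¹ :=
    L.summable_norm_per_pow_inv.tendsto_cofinite_zero.eventually_lt_const (by positivity)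
  filter_upwards [hsmall] with p hp z hz
  have hpos : 0 < ‖L.per p‖ := norm_pos_iff.2 (L.per_ne_zero p)
  have hlarge : 2 * r < ‖L.per p‖ :=
    lt_of_pow_lt_pow_left₀ 3 hpos.le ((inv_lt_inv₀ (by positivity) (by positivity)).1 hp)
  have hzr : ‖z‖ < r := by simpa using hz
  have hhalf : ‖z / L.per p‖ ≤ 1 / 2 := by
    rw [norm_div, div_le_iff₀ hpos]
    linarith
  calc ‖weierstrassFactor (z / L.per p) - 1‖
      ≤ 2 * ‖z / L.per p‖ ^ 3 := norm_weierstrassFactor_sub_one_le hhalf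
    _ = 2 * ‖z‖ ^ 3 * (‖L.per p‖ ^ 3)⁻¹ := by rw [norm_div, div_pow, div_eq_mul_inv, mul_assoc]
    _ ≤ 2 * r ^ 3 * (‖L.per p‖ ^ 3)⁻¹ := by gcongr

lemma differentiable_weierstrassFactor_div (ω : ℂ) :
    Differentiable ℂ fun z => weierstrassFactor (z / ω) := by
  fun_prop

lemma hasProdLocallyUniformlyOn_sigmaProd :
    HasProdLocallyUniformlyOn
      (fun (p : {p : ℤ × ℤ // p ≠ 0}) z => weierstrassFactor (z / L.per p)) L.sigmaProd
      Set.univ := by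
  refine hasProdLocallyUniformlyOn_of_forall_compact isOpen_univ fun K _ hK => ?_
  obtain ⟨r, hr, hKr⟩ := hK.isBounded.subset_ball_lt 0 (0 : ℂ)
  have h := (L.summable_norm_per_pow_inv.mul_left (2 * r ^ 3)).hasProdUniformlyOn_one_add hK
    (f := fun (p : {p : ℤ × ℤ // p ≠ 0}) z => weierstrassFactor (z / L.per p) - 1)
    ((L.eventually_norm_weierstrassFactor_sub_one_le hr).mono fun p hp z hz => hp z (hKr hz))
    fun p => ((differentiable_weierstrassFactor_div _).sub_const 1).continuous.continuousOn
  simpa only [add_sub_cancel] using! h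

lemma weierstrassFactor_div_per_ne_zero {z : ℂ} (hz : z ∉ L.lattice) (p : {p : ℤ × ℤ // p ≠ 0}) :
    weierstrassFactor (z / L.per p) ≠ 0 := by
  rw [Ne, weierstrassFactor_eq_zero_iff, div_eq_one_iff_eq (L.per_ne_zero p)]
  rintro rfl
  exact hz (L.per_mem_lattice p)

lemma sigmaProd_ne_zero {z : ℂ} (hz : z ∉ L.lattice) : L.sigmaProd z ≠ 0 := by
  have hsum : Summable fun p : {p : ℤ × ℤ // p ≠ 0} =>
      ‖weierstrassFactor (z / L.per p) - 1‖ := by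
    refine (L.summable_norm_per_pow_inv.mul_left (2 * (‖z‖ + 1) ^ 3)).of_norm_bounded_eventually ?_
    filter_upwards [L.eventually_norm_weierstrassFactor_sub_one_le (r := ‖z‖ + 1) (by positivity)]
      with p hp
    simpa using hp z (by simp)
  simpa [sigmaProd] using tprod_one_add_ne_zero_of_summable
    (f := fun p : {p : ℤ × ℤ // p ≠ 0} => weierstrassFactor (z / L.per p) - 1)
    (fun p => by simpa using L.weierstrassFactor_div_per_ne_zero hz p) hsum

lemma differentiable_prod_weierstrassFactor (s : Finset {p : ℤ × ℤ // p ≠ 0}) :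
    Differentiable ℂ fun z => ∏ p ∈ s, weierstrassFactor (z / L.per p) :=
  Differentiable.fun_finsetProd fun _ _ => differentiable_weierstrassFactor_div _

lemma tendstoLocallyUniformlyOn_sigmaProd :
    TendstoLocallyUniformlyOn
      (fun (s : Finset {p : ℤ × ℤ // p ≠ 0}) z => ∏ p ∈ s, weierstrassFactor (z / L.per p))
      L.sigmaProd atTop Set.univ :=
  hasProdLocallyUniformlyOn_iff_tendstoLocallyUniformlyOn.1 L.hasProdLocallyUniformlyOn_sigmaProd

@[fun_prop]
lemma differentiable_sigmaProd : Differentiable ℂ L.sigmaProd :=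
  differentiableOn_univ.1 <| L.tendstoLocallyUniformlyOn_sigmaProd.differentiableOn
    (.of_forall fun s => (L.differentiable_prod_weierstrassFactor s).differentiableOn) isOpen_univ

@[fun_prop]
lemma differentiable_sigma : Differentiable ℂ L.sigma := by
  rw [show L.sigma = fun z => z * L.sigmaProd z from funext L.sigma_eq_mul_sigmaProd]
  fun_prop

@[simp] lemma sigma_zero : L.sigma 0 = 0 := by simp [sigma]

lemma deriv_sigma_zero : deriv L.sigma 0 = 1 := by
  have h := (hasDerivAt_id' (0 : ℂ)).fun_mul (L.differentiable_sigmaProd 0).hasDerivAt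
  rw [show L.sigma = fun z => z * L.sigmaProd z from funext L.sigma_eq_mul_sigmaProd, h.deriv]
  simp [sigmaProd, weierstrassFactor_zero]

lemma sigma_eq_zero_iff {z : ℂ} : L.sigma z = 0 ↔ z ∈ L.lattice := by
  rw [sigma_eq_mul_sigmaProd, mul_eq_zero]
  refine ⟨fun h => ?_, fun hz => or_iff_not_imp_left.2 fun hz0 => ?_⟩
  · contrapose! h
    exact ⟨ne_zero_of_notMem_lattice h, L.sigmaProd_ne_zero h⟩
  · obtain ⟨p, rfl⟩ := L.exists_per_eq hz
    refine tprod_of_exists_eq_zero ⟨⟨p, L.per_eq_zero_iff.not.1 hz0⟩, ?_⟩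
    rw [weierstrassFactor_eq_zero_iff, div_self hz0]

lemma sigma_ne_zero {z : ℂ} (hz : z ∉ L.lattice) : L.sigma z ≠ 0 :=
  L.sigma_eq_zero_iff.not.2 hz

lemma sigmaProd_neg (z : ℂ) : L.sigmaProd (-z) = L.sigmaProd z := by
  have h := ((Equiv.neg (ℤ × ℤ)).subtypeEquiv (p := (· ≠ 0)) (q := (· ≠ 0))
    fun p => by simp).tprod_eq fun p => weierstrassFactor (-z / L.per p)
  simpa [sigmaProd, per_neg] using h.symm

@[simp] lemma sigma_neg (z : ℂ) : L.sigma (-z) = -L.sigma z := by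
  rw [sigma_eq_mul_sigmaProd, sigma_eq_mul_sigmaProd, sigmaProd_neg, neg_mul]

@[simp] lemma zeta_neg (z : ℂ) : L.zeta (-z) = -L.zeta z := by
  have hderiv : deriv L.sigma (-z) = deriv L.sigma z := by
    have h := congrArg (deriv · z) (funext L.sigma_neg)
    rw [deriv_comp_neg, deriv.fun_neg] at h
    exact neg_injective h
  rw [zeta, zeta, hderiv, sigma_neg, div_neg]

lemma hasSum_weierstrassP_sub (z : ℂ) :
    HasSum (fun p : {p : ℤ × ℤ // p ≠ 0} => 1 / (z - L.per p) ^ 2 - 1 / L.per p ^ 2)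
      (L.toPeriodPair.weierstrassP z - 1 / z ^ 2) := by
  let f (p : ℤ × ℤ) : ℂ := if p = 0 then 0 else 1 / (z - L.per p) ^ 2 - 1 / L.per p ^ 2
  have hf : HasSum f (L.toPeriodPair.weierstrassP z - 1 / z ^ 2) := by
    convert! L.toPeriodPair.latticeEquivProd.symm.toEquiv.hasSum_iff.2
      (L.toPeriodPair.hasSum_weierstrassPExcept (0 : L.lattice) z) using 1
    · funext p
      simp [f, per_eq_latticeEquivProd_symm]
    · rw [PeriodPair.weierstrassPExcept_def]
      simp [sub_eq_add_neg]
  have hsupp : Function.support f ⊆ {p | p ≠ 0} := fun p hp hp0 => hp (if_pos hp0)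
  exact ((hasSum_subtype_iff_of_support_subset hsupp).2 hf).congr_fun fun p => (if_neg p.2).symm

lemma hasDerivAt_logDeriv_prod_weierstrassFactor (s : Finset {p : ℤ × ℤ // p ≠ 0}) {z : ℂ}
    (hz : z ∉ L.lattice) :
    HasDerivAt (logDeriv fun x => ∏ p ∈ s, weierstrassFactor (x / L.per p))
      (∑ p ∈ s, -(1 / (z - L.per p) ^ 2 - 1 / L.per p ^ 2)) z := by
  have hsum : HasDerivAt (fun x => ∑ p ∈ s, logDeriv (fun y => weierstrassFactor (y / L.per p)) x)
      (∑ p ∈ s, -(1 / (z - L.per p) ^ 2 - 1 / L.per p ^ 2)) z :=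
    .fun_sum fun p _ => hasDerivAt_logDeriv_weierstrassFactor_div (L.per_ne_zero p)
      fun h => hz (h ▸ L.per_mem_lattice p)
  refine hsum.congr_of_eventuallyEq ?_
  filter_upwards [L.isOpen_compl_lattice.mem_nhds hz] with x hx
  exact logDeriv_prod (fun p _ => L.weierstrassFactor_div_per_ne_zero hx p)
    fun p _ => differentiable_weierstrassFactor_div _ x

lemma hasDerivAt_logDeriv_sigmaProd {z : ℂ} (hz : z ∉ L.lattice) :
    HasDerivAt (logDeriv L.sigmaProd) (1 / z ^ 2 - L.toPeriodPair.weierstrassP z) z := by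
  let P (s : Finset {p : ℤ × ℤ // p ≠ 0}) (x : ℂ) : ℂ := ∏ p ∈ s, weierstrassFactor (x / L.per p)
  have hP := L.tendstoLocallyUniformlyOn_sigmaProd
  have hP' := hP.deriv
    (.of_forall fun s => (L.differentiable_prod_weierstrassFactor s).differentiableOn) isOpen_univ
  have hlim : TendstoLocallyUniformlyOn (fun s => logDeriv (P s)) (logDeriv L.sigmaProd) atTop
      (L.lattice : Set ℂ)ᶜ :=
    (hP'.mono (Set.subset_univ _)).div₀ (hP.mono (Set.subset_univ _))
      L.differentiable_sigmaProd.deriv.continuous.continuousOn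
      L.differentiable_sigmaProd.continuous.continuousOn fun x hx => L.sigmaProd_ne_zero hx
  have hdiff : DifferentiableAt ℂ (logDeriv L.sigmaProd) z :=
    (L.differentiable_sigmaProd.deriv z).div (L.differentiable_sigmaProd z) (L.sigmaProd_ne_zero hz)
  have hlogP (s : Finset {p : ℤ × ℤ // p ≠ 0}) : DifferentiableOn ℂ (logDeriv (P s))
      (L.lattice : Set ℂ)ᶜ := fun x hx =>
    (L.hasDerivAt_logDeriv_prod_weierstrassFactor s hx).differentiableAt.differentiableWithinAt
  have hlim' := (hlim.deriv (.of_forall hlogP) L.isOpen_compl_lattice).tendsto_at hz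
  have hsum := (L.hasSum_weierstrassP_sub z).neg
  rw [neg_sub] at hsum
  rw [← tendsto_nhds_unique (hlim'.congr fun s =>
    (L.hasDerivAt_logDeriv_prod_weierstrassFactor s hz).deriv) hsum]
  exact hdiff.hasDerivAt

lemma zeta_eq_add_logDeriv_sigmaProd {z : ℂ} (hz : z ∉ L.lattice) :
    L.zeta z = 1 / z + logDeriv L.sigmaProd z := by
  rw [← logDeriv_id' z, ← logDeriv_mul z (ne_zero_of_notMem_lattice hz) (L.sigmaProd_ne_zero hz)
    differentiableAt_fun_id (L.differentiable_sigmaProd z), logDeriv_apply, zeta]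
  simp only [← sigma_eq_mul_sigmaProd]

lemma hasDerivAt_zeta {z : ℂ} (hz : z ∉ L.lattice) :
    HasDerivAt L.zeta (-L.toPeriodPair.weierstrassP z) z := by
  have h : HasDerivAt (fun x => 1 / x + logDeriv L.sigmaProd x)
      (-L.toPeriodPair.weierstrassP z) z := by
    convert! (hasDerivAt_inv (ne_zero_of_notMem_lattice hz)).fun_add
      (L.hasDerivAt_logDeriv_sigmaProd hz) using 1
    · simp only [one_div]
    · ring
  refine h.congr_of_eventuallyEq ?_
  filter_upwards [L.isOpen_compl_lattice.mem_nhds hz] with x hx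
    using L.zeta_eq_add_logDeriv_sigmaProd hx

lemma hasDerivAt_sigma {z : ℂ} (hz : z ∉ L.lattice) :
    HasDerivAt L.sigma (L.zeta z * L.sigma z) z := by
  rw [zeta, div_mul_cancel₀ _ (L.sigma_ne_zero hz)]
  exact (L.differentiable_sigma z).hasDerivAt

lemma eq_of_hasDerivAt_zero_compl_lattice {f : ℂ → ℂ}
    (hf : ∀ z, z ∉ L.lattice → HasDerivAt f 0 z) {x y : ℂ} (hx : x ∉ L.lattice)
    (hy : y ∉ L.lattice) : f x = f y := by
  have hconn : IsPreconnected (L.lattice : Set ℂ)ᶜ :=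
    (L.countable_lattice.isConnected_compl_of_one_lt_rank
      (by rw [Complex.rank_real_complex]; norm_num)).isPreconnected
  exact L.isOpen_compl_lattice.is_const_of_deriv_eq_zero hconn
    (fun z hz => (hf z hz).differentiableAt.differentiableWithinAt) (fun z hz => (hf z hz).deriv)
    hx hy

lemma exists_zeta_add_eq {w : ℂ} (hw : w ∈ L.lattice) :
    ∃ η, ∀ z, z ∉ L.lattice → L.zeta (z + w) = L.zeta z + η := by
  obtain ⟨z₀, hz₀⟩ := L.exists_notMem_lattice
  refine ⟨L.zeta (z₀ + w) - L.zeta z₀, fun z hz => eq_add_of_sub_eq' ?_⟩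
  refine L.eq_of_hasDerivAt_zero_compl_lattice (f := fun z => L.zeta (z + w) - L.zeta z)
    (fun x hx => ?_) hz hz₀
  have hxw : x + w ∉ L.lattice := by rwa [add_mem_lattice_iff hw]
  have h := ((L.hasDerivAt_zeta hxw).comp_add_const x w).fun_sub (L.hasDerivAt_zeta hx)
  rwa [L.toPeriodPair.weierstrassP_add_coe x ⟨w, hw⟩, sub_self] at h

lemma exists_sigma_add_eq {w : ℂ} (hw : w ∈ L.lattice) :
    ∃ η c, c ≠ 0 ∧ ∀ z, L.sigma (z + w) = c * Complex.exp (η * z) * L.sigma z := by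
  obtain ⟨η, hη⟩ := L.exists_zeta_add_eq hw
  obtain ⟨z₀, hz₀⟩ := L.exists_notMem_lattice
  let f (z : ℂ) : ℂ := L.sigma (z + w) * Complex.exp (-(η * z)) / L.sigma z
  have hf (z : ℂ) (hz : z ∉ L.lattice) : HasDerivAt f 0 z := by
    have hzw : z + w ∉ L.lattice := by rwa [add_mem_lattice_iff hw]
    have hexp : HasDerivAt (fun z : ℂ => Complex.exp (-(η * z)))
        (Complex.exp (-(η * z)) * -(η * 1)) z := ((hasDerivAt_id' z).const_mul η).fun_neg.cexp
    convert! (((L.hasDerivAt_sigma hzw).comp_add_const z w).fun_mul hexp).fun_div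
      (L.hasDerivAt_sigma hz) (L.sigma_ne_zero hz) using 1
    rw [hη z hz]
    ring
  refine ⟨η, f z₀, ?_, fun z => ?_⟩
  · have hzw : z₀ + w ∉ L.lattice := by rwa [add_mem_lattice_iff hw]
    exact div_ne_zero (mul_ne_zero (L.sigma_ne_zero hzw) (Complex.exp_ne_zero _))
      (L.sigma_ne_zero hz₀)
  · by_cases hz : z ∈ L.lattice
    · rw [L.sigma_eq_zero_iff.2 hz, L.sigma_eq_zero_iff.2 ((add_mem_lattice_iff hw).2 hz), mul_zero]
    · have hσ := L.sigma_ne_zero hz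
      rw [← L.eq_of_hasDerivAt_zero_compl_lattice hf hz hz₀]
      simp only [f, Complex.exp_neg]
      field_simp

lemma deriv_sigma_ne_zero {w : ℂ} (hw : w ∈ L.lattice) : deriv L.sigma w ≠ 0 := by
  obtain ⟨η, c, hc, hσ⟩ := L.exists_sigma_add_eq hw
  have h := deriv_comp_add_of_multiplier (z := 0) L.differentiable_sigma (by fun_prop) hσ
  rw [zero_add, sigma_zero, deriv_sigma_zero] at h
  simp [h, hc]

lemma eq_of_eq_off_lattice {f g : ℂ → ℂ} (hf : Continuous f) (hg : Continuous g) (u v : ℂ)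
    (h : ∀ z, z + u ∉ L.lattice → z + v ∉ L.lattice → f z = g z) (z : ℂ) : f z = g z := by
  have hcountable : {z | z + u ∈ L.lattice ∨ z + v ∈ L.lattice}.Countable :=
    (L.countable_lattice.preimage (add_left_injective u)).union
      (L.countable_lattice.preimage (add_left_injective v))
  refine congrFun (hf.ext_on (hcountable.dense_compl ℝ) hg fun z hz => ?_) z
  rw [Set.mem_compl_iff, Set.mem_ofPred_eq, not_or] at hz
  exact h z hz.1 hz.2

lemma deriv_sigma_mul_sigma_ne_zero {e z : ℂ} (he : e ∉ L.lattice)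
    (hz : L.sigma z * L.sigma (z + e) = 0) :
    deriv (fun x => L.sigma x * L.sigma (x + e)) z ≠ 0 := by
  have hshift : DifferentiableAt ℂ (fun x => L.sigma (x + e)) z := by fun_prop
  rw [deriv_fun_mul (L.differentiable_sigma z) hshift, deriv_comp_add_const]
  rcases mul_eq_zero.1 hz with h | h <;> rw [sigma_eq_zero_iff] at h
  · have hze : z + e ∉ L.lattice := by rwa [add_comm, add_mem_lattice_iff h]
    rw [L.sigma_eq_zero_iff.2 h, zero_mul, add_zero]
    exact mul_ne_zero (L.deriv_sigma_ne_zero h) (L.sigma_ne_zero hze)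
  · have hz' : z ∉ L.lattice := fun hz' => he (by rwa [add_comm, add_mem_lattice_iff hz'] at h)
    rw [L.sigma_eq_zero_iff.2 h, mul_zero, zero_add]
    exact mul_ne_zero (L.sigma_ne_zero hz') (L.deriv_sigma_ne_zero h)

/-- All products `σ(z + u) σ(z + v)` with the same sum `u + v` have the same multipliers. -/
lemma exists_multiplier_sigma_mul_sigma {w : ℂ} (hw : w ∈ L.lattice) (e : ℂ) :
    ∃ m : ℂ → ℂ, Differentiable ℂ m ∧ (∀ z, m z ≠ 0) ∧ ∀ u v z, u + v = e →
      L.sigma (z + w + u) * L.sigma (z + w + v) = m z * (L.sigma (z + u) * L.sigma (z + v)) := by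
  obtain ⟨η, c, hc, hσ⟩ := L.exists_sigma_add_eq hw
  refine ⟨fun z => c ^ 2 * Complex.exp (η * (2 * z + e)), by fun_prop, fun z => ?_, ?_⟩
  · exact mul_ne_zero (pow_ne_zero 2 hc) (Complex.exp_ne_zero _)
  · rintro u v z rfl
    beta_reduce
    rw [add_right_comm z w u, add_right_comm z w v, hσ, hσ,
      show η * (2 * z + (u + v)) = η * (z + u) + η * (z + v) by ring, Complex.exp_add]
    ring

lemma sigma_three_term_of_notMem {a b c : ℂ} (ha : a ∉ L.lattice) (hbc : b + c ∉ L.lattice)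
    (habc : a + (b + c) ∉ L.lattice) (d : ℂ) :
    L.sigma (a + b) * L.sigma (a + c) * (L.sigma d * L.sigma (d + (b + c))) -
      L.sigma b * L.sigma c * (L.sigma (d + (a + (b + c))) * L.sigma (d - a)) =
    L.sigma a * L.sigma (a + (b + c)) * (L.sigma (d + b) * L.sigma (d + c)) := by
  let f (z : ℂ) : ℂ := L.sigma (a + b) * L.sigma (a + c) * (L.sigma z * L.sigma (z + (b + c))) -
    L.sigma b * L.sigma c * (L.sigma (z + (a + (b + c))) * L.sigma (z + -a)) -
    L.sigma a * L.sigma (a + (b + c)) * (L.sigma (z + b) * L.sigma (z + c))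
  let g (z : ℂ) : ℂ := L.sigma z * L.sigma (z + (b + c))
  have hmult : ∀ w ∈ L.lattice, ∃ m : ℂ → ℂ, Differentiable ℂ m ∧ (∀ z, m z ≠ 0) ∧
      (∀ z, f (z + w) = m z * f z) ∧ ∀ z, g (z + w) = m z * g z := by
    intro w hw
    obtain ⟨m, hm, hm0, hσ⟩ := L.exists_multiplier_sigma_mul_sigma hw (b + c)
    have hg (z : ℂ) : g (z + w) = m z * g z := by simpa using hσ 0 (b + c) z (zero_add _)
    refine ⟨m, hm, hm0, fun z => ?_, hg⟩
    linear_combination L.sigma (a + b) * L.sigma (a + c) * hg z -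
      L.sigma b * L.sigma c * hσ (a + (b + c)) (-a) z (by ring) -
      L.sigma a * L.sigma (a + (b + c)) * hσ b c z rfl
  have hf_add {z w : ℂ} (hw : w ∈ L.lattice) (hz : f z = 0) : f (z + w) = 0 := by
    obtain ⟨m, -, -, hfm, -⟩ := hmult w hw
    rw [hfm, hz, mul_zero]
  have hf_zero : f 0 = 0 := by
    simp only [f, sigma_zero, zero_add, zero_mul, mul_zero, sigma_neg]
    ring
  have hf_neg : f (-(b + c)) = 0 := by
    have h : -(b + c) + -a = -(a + (b + c)) := by ring
    have hb : -(b + c) + b = -c := by ring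
    have hc : -(b + c) + c = -b := by ring
    simp only [f, h, hb, hc, sigma_neg, neg_add_cancel, sigma_zero, neg_add_cancel_comm_assoc]
    ring
  have hfa : f a = 0 := by
    simp only [f, add_neg_cancel, sigma_zero, mul_zero, sub_zero]
    ring
  have hzeros (z : ℂ) (hz : g z = 0) : f z = 0 ∧ deriv g z ≠ 0 := by
    refine ⟨?_, L.deriv_sigma_mul_sigma_ne_zero hbc hz⟩
    rcases mul_eq_zero.1 hz with h | h <;> rw [sigma_eq_zero_iff] at h
    · simpa using hf_add h hf_zero
    · simpa only [neg_add_cancel_comm_assoc] using hf_add h hf_neg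
  have hf : f = 0 := eq_zero_of_multiplier L.lattice (by fun_prop) (by fun_prop) hmult hzeros
    hfa (mul_ne_zero (L.sigma_ne_zero ha) (L.sigma_ne_zero habc))
  simpa only [f, sub_eq_add_neg d, Pi.zero_apply, sub_eq_zero] using congrFun hf d

/-- The Fay identity in genus one. -/
theorem sigma_three_term (a b c d : ℂ) :
    L.sigma (a + b) * L.sigma (a + c) * (L.sigma d * L.sigma (d + (b + c))) -
      L.sigma b * L.sigma c * (L.sigma (d + (a + (b + c))) * L.sigma (d - a)) =
    L.sigma a * L.sigma (a + (b + c)) * (L.sigma (d + b) * L.sigma (d + c)) := by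
  have hσ : Continuous L.sigma := L.differentiable_sigma.continuous
  revert b
  refine L.eq_of_eq_off_lattice (by fun_prop) (by fun_prop) c c fun b hbc _ => ?_
  revert a
  refine L.eq_of_eq_off_lattice (by fun_prop) (by fun_prop) 0 (b + c) fun a ha habc => ?_
  exact L.sigma_three_term_of_notMem (by simpa using ha) hbc habc d

variable {L}

lemma chi_eq_sigma_div {x y z : ℂ} (hx : x ∉ L.lattice) (hy : y ∉ L.lattice)
    (hz : z ∉ L.lattice) (hxyz : x + y + z ∉ L.lattice) :
    L.chi y z x =
      L.sigma (x + y) * L.sigma (y + z) * L.sigma (x + z) /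
        (L.sigma x * L.sigma y * L.sigma z * L.sigma (x + y + z)) := by
  have hident (t : ℂ) : L.sigma y * L.sigma z * (L.sigma (t + x) * L.sigma (t + -(x + y + z))) -
      L.sigma (x + y) * L.sigma (x + z) * (L.sigma (t + -(y + z)) * L.sigma t) +
      L.sigma x * L.sigma (x + y + z) * (L.sigma (t + -y) * L.sigma (t + -z)) = 0 := by
    have h := L.sigma_three_term x (-(x + y)) (-(x + z)) (t + x)
    rw [show x + -(x + y) = -y by ring, show x + -(x + z) = -z by ring,
      show t + x + (-(x + y) + -(x + z)) = t + -(x + y + z) by ring,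
      show x + (-(x + y) + -(x + z)) = -(x + y + z) by ring,
      show t + x + -(x + y + z) = t + -(y + z) by ring, show t + x + -(x + y) = t + -y by ring,
      show t + x + -(x + z) = t + -z by ring, add_sub_cancel_right] at h
    simp only [sigma_neg] at h
    linear_combination h
  have hderiv {e : ℂ} (he : e ∉ L.lattice) :
      HasDerivAt (fun t => L.sigma (t + e)) (L.zeta e * L.sigma e) 0 :=
    HasDerivAt.comp_add_const 0 e (by simpa using L.hasDerivAt_sigma he)
  have hσ₀ : HasDerivAt L.sigma 1 0 := L.deriv_sigma_zero ▸ (L.differentiable_sigma 0).hasDerivAt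
  have hyz : HasDerivAt (fun t => L.sigma (t + -(y + z))) (deriv L.sigma (-(y + z))) 0 :=
    HasDerivAt.comp_add_const 0 _ (by simpa using (L.differentiable_sigma _).hasDerivAt)
  have h := ((((hderiv hx).mul (hderiv (neg_mem_iff.not.2 hxyz))).const_mul
    (L.sigma y * L.sigma z)).sub ((hyz.mul hσ₀).const_mul (L.sigma (x + y) * L.sigma (x + z)))).add
    (((hderiv (neg_mem_iff.not.2 hy)).mul (hderiv (neg_mem_iff.not.2 hz))).const_mul
    (L.sigma x * L.sigma (x + y + z)))
  have h₀ := h.unique ((hasDerivAt_const 0 0).congr_of_eventuallyEq (.of_forall hident))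
  simp only [zero_add, sigma_neg, zeta_neg, sigma_zero] at h₀
  rw [chi, eq_div_iff (by simp [hx, hy, hz, hxyz, sigma_eq_zero_iff])]
  linear_combination -h₀

lemma Phi_comm (x k : ℂ) : L.Phi x k = L.Phi k x := by
  rw [Phi, Phi, add_comm, mul_comm (L.sigma x)]

lemma Phi_ne_zero {x k : ℂ} (hx : x ∉ L.lattice) (hk : k ∉ L.lattice) (hxk : x + k ∉ L.lattice) :
    L.Phi x k ≠ 0 :=
  div_ne_zero (L.sigma_ne_zero hxk) (mul_ne_zero (L.sigma_ne_zero hx) (L.sigma_ne_zero hk))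

lemma Phi_mul_Phi {x k l : ℂ} (hx : x ∉ L.lattice) (hk : k ∉ L.lattice) (hl : l ∉ L.lattice)
    (hkl : k + l ∉ L.lattice) (hxkl : x + k + l ∉ L.lattice) :
    L.Phi x k * L.Phi x l = L.Phi x (k + l) * L.chi k l x := by
  rw [chi_eq_sigma_div hx hk hl hxkl, Phi, Phi, Phi, ← add_assoc]
  have := L.sigma_ne_zero hkl
  have := L.sigma_ne_zero hxkl
  field_simp

lemma Phi_mul_Phi_sub_Phi_mul_Phi {x d y e k : ℂ} (hx : x ∉ L.lattice) (hd : d ∉ L.lattice)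
    (hy : y ∉ L.lattice) (he : e ∉ L.lattice) (hk : k ∉ L.lattice) (hxd : x + d ∉ L.lattice)
    (hxdk : k + x + d ∉ L.lattice) (hsum : x + d = y + e) :
    L.Phi x k * L.Phi d k - L.Phi y k * L.Phi e k =
      L.Phi (x + d) k * (L.zeta x + L.zeta d - L.zeta y - L.zeta e) := by
  have h₁ := Phi_mul_Phi hk hx hd hxd hxdk
  have h₂ := Phi_mul_Phi hk hy he (hsum ▸ hxd) (by rwa [add_assoc, ← hsum, ← add_assoc])
  rw [Phi_comm x, Phi_comm d, Phi_comm y, Phi_comm e, h₁, h₂, ← hsum, Phi_comm k, chi, chi,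
    add_assoc k, add_assoc k, ← hsum]
  ring

lemma Phi_add_mul_Phi_neg {ξ d κ κ' : ℂ} (hξ : ξ ∉ L.lattice) (hd : d ∉ L.lattice)
    (hξd : ξ + d ∉ L.lattice) (hκ : κ ∉ L.lattice) (hκ' : κ' ∉ L.lattice)
    (hκκ' : κ + κ' ∉ L.lattice) :
    L.Phi (ξ + d) (κ + κ') * L.Phi d (-κ) =
      L.Phi ξ (κ + κ') * L.Phi d κ' - L.Phi (ξ + d) κ' * L.Phi ξ κ := by
  have h := L.sigma_three_term κ ξ κ' d
  simp only [Phi, sigma_neg, ← sub_eq_add_neg]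
  rw [show ξ + d + (κ + κ') = d + (κ + (ξ + κ')) by ring, show ξ + (κ + κ') = κ + (ξ + κ') by ring,
    show ξ + d + κ' = d + (ξ + κ') by ring, add_comm ξ d, add_comm ξ κ]
  have := L.sigma_ne_zero hξ
  have := L.sigma_ne_zero hd
  have := L.sigma_ne_zero (add_comm ξ d ▸ hξd)
  have := L.sigma_ne_zero hκ
  have := L.sigma_ne_zero hκ'
  have := L.sigma_ne_zero hκκ'
  field_simp
  linear_combination h

end EllLattice

section LinearAlgebra

variable {R m n : Type*} [CommRing R] [Fintype m] [DecidableEq m] [Fintype n] [DecidableEq n]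

lemma inv_mulVec_of_eq_sub_vecMulVec {A A' : Matrix n n R} {r b : n → R} (hA : IsUnit A.det)
    (hA' : IsUnit A'.det) (h : A' = A - vecMulVec r b) (v : n → R) :
    A'⁻¹ *ᵥ v = A⁻¹ *ᵥ v + (b ⬝ᵥ (A'⁻¹ *ᵥ v)) • (A⁻¹ *ᵥ r) := by
  have hAv : A *ᵥ (A'⁻¹ *ᵥ v) = v + (b ⬝ᵥ (A'⁻¹ *ᵥ v)) • r := by
    rw [eq_add_of_sub_eq h.symm, add_mulVec, mulVec_mulVec, mul_nonsing_inv _ hA', one_mulVec,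
      vecMulVec_mulVec, op_smul_eq_smul]
  rw [← mulVec_smul, ← mulVec_add, ← hAv, mulVec_mulVec, nonsing_inv_mul _ hA, one_mulVec]

lemma inv_one_add_mul_mul_comm {B : Matrix m n R} {C : Matrix n m R}
    (h : IsUnit (1 + B * C).det) : (1 + C * B)⁻¹ * C = C * (1 + B * C)⁻¹ := by
  have h' : IsUnit (1 + C * B).det := by rwa [det_one_add_mul_comm]
  let := invertibleOfIsUnitDet _ h
  let := invertibleOfIsUnitDet _ h'
  rw [inv_mul_eq_iff_eq_mul_of_invertible, ← Matrix.mul_assoc, eq_comm,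
    mul_inv_eq_iff_eq_mul_of_invertible, Matrix.mul_add, Matrix.add_mul, Matrix.mul_assoc,
    Matrix.mul_one, Matrix.one_mul]

end LinearAlgebra

namespace KPData

variable {N N' : ℕ}

/-- Genericity of the rapidities together with the auxiliary parameter `α`. -/
structure SpectralRegular (D : KPData N N') (α : ℂ) : Prop where
  κ_notMem (i : Fin N) : D.κ i ∉ D.L.lattice
  κ'_notMem (j : Fin N') : D.κ' j ∉ D.L.lattice
  α_notMem : α ∉ D.L.lattice
  κ_add_κ'_notMem (i : Fin N) (j : Fin N') : D.κ i + D.κ' j ∉ D.L.lattice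
  κ_add_α_notMem (i : Fin N) : D.κ i + α ∉ D.L.lattice

/-- Genericity of a lattice parameter `d` with respect to the rapidities. -/
structure DirectionRegular (D : KPData N N') (d : ℂ) : Prop where
  notMem : d ∉ D.L.lattice
  add_neg_κ_notMem (i : Fin N) : d + -D.κ i ∉ D.L.lattice
  add_κ'_notMem (j : Fin N') : d + D.κ' j ∉ D.L.lattice

variable {D : KPData N N'} {α d : ℂ}

lemma DirectionRegular.Phi_neg_κ_ne_zero (hd : D.DirectionRegular d) (hD : D.SpectralRegular α)
    (i : Fin N) : D.L.Phi d (-D.κ i) ≠ 0 :=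
  EllLattice.Phi_ne_zero hd.notMem (neg_mem_iff.not.2 (hD.κ_notMem i)) (hd.add_neg_κ_notMem i)

lemma DirectionRegular.Phi_κ'_ne_zero (hd : D.DirectionRegular d) (hD : D.SpectralRegular α)
    (j : Fin N') : D.L.Phi d (D.κ' j) ≠ 0 :=
  EllLattice.Phi_ne_zero hd.notMem (hD.κ'_notMem j) (hd.add_κ'_notMem j)

end KPData

/-- The position `x = ξ` and the plane-wave factors at one lattice point, stripped of their gauge
exponentials: `ρ_i = p_i e^{ζ(ξ)κ_i}` and `ν_j = q_j e^{ζ(ξ)κ′_j}`. In these variables `Ψ` becomes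
`Φ` and a lattice shift is multiplicative. -/
@[ext]
structure KPState (N N' : ℕ) where
  x : ℂ
  p : Fin N → ℂ
  q : Fin N' → ℂ

namespace KPState

variable {N N' : ℕ}

/-- The shift by a lattice parameter `d`. -/
def shift (D : KPData N N') (d : ℂ) (S : KPState N N') : KPState N N' where
  x := S.x + d
  p i := S.p i * D.L.Phi d (-D.κ i)
  q j := S.q j / D.L.Phi d (D.κ' j)

lemma shift_x (D : KPData N N') (d : ℂ) (S : KPState N N') : (S.shift D d).x = S.x + d := rfl

section Vectors

variable (D : KPData N N') (S : KPState N N')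

/-- The dressed Cauchy matrix `M`. -/
def M : Matrix (Fin N) (Fin N') ℂ := of fun i j => S.p i * D.L.Phi S.x (D.κ i + D.κ' j) * S.q j

/-- The vector `r`. -/
def r : Fin N → ℂ := fun i => S.p i * D.L.Phi S.x (D.κ i)

/-- The vector `s`. -/
def s : Fin N' → ℂ := fun j => S.q j * D.L.Phi S.x (D.κ' j)

/-- The vector `Φ_ξ(α) χ_{α,K}(ξ)⁻¹ r`, with the quotient carried out. -/
def a (α : ℂ) : Fin N → ℂ := fun i => S.p i * D.L.Phi S.x (D.κ i + α)

/-- The matrix `1 + MC`. -/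
def A : Matrix (Fin N) (Fin N) ℂ := 1 + S.M D * D.C

/-- The row vector `sᵀC`. -/
def b : Fin N → ℂ := S.s D ᵥ* D.C

/-- The vector `Φ_ξ(α) u_α`. -/
def u (α : ℂ) : Fin N → ℂ := (S.A D)⁻¹ *ᵥ S.a D α

/-- The vector `u₀ = (1 + MC)⁻¹ r`. -/
def u₀ : Fin N → ℂ := (S.A D)⁻¹ *ᵥ S.r D

/-- The gauge variable `𝒱_α`. -/
def V (α : ℂ) : ℂ := D.L.Phi S.x α - S.b D ⬝ᵥ S.u D α

/-- The potential `w₀ - ζ(ξ)`, whose differences are the coefficients of the linear system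
satisfied by `𝒱_α`. -/
def potential : ℂ := S.b D ⬝ᵥ S.u₀ D - D.L.zeta S.x

end Vectors

/-- Genericity of a state: its position avoids the poles and zeros of the elliptic functions
evaluated there, and `1 + MC` is invertible. -/
structure Regular (D : KPData N N') (α : ℂ) (S : KPState N N') : Prop where
  x_notMem : S.x ∉ D.L.lattice
  κ'_add_x_notMem (j : Fin N') : D.κ' j + S.x ∉ D.L.lattice
  α_add_x_notMem : α + S.x ∉ D.L.lattice
  isUnit_det : IsUnit (S.A D).det

variable {D : KPData N N'} {α d e l : ℂ} {S : KPState N N'}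

lemma shift_comm (D : KPData N N') (d e : ℂ) (S : KPState N N') :
    (S.shift D e).shift D d = (S.shift D d).shift D e := by
  ext
  · exact add_right_comm _ _ _
  · exact mul_right_comm _ _ _
  · exact div_right_comm _ _ _

lemma M_shift (hD : D.SpectralRegular α) (hd : D.DirectionRegular d) (hS : S.Regular D α)
    (hSd : (S.shift D d).Regular D α) :
    (S.shift D d).M D = S.M D - vecMulVec (S.r D) ((S.shift D d).s D) := by
  ext i j
  have hΦ := EllLattice.Phi_add_mul_Phi_neg hS.x_notMem hd.notMem hSd.x_notMem (hD.κ_notMem i)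
    (hD.κ'_notMem j) (hD.κ_add_κ'_notMem i j)
  have hne := hd.Phi_κ'_ne_zero hD j
  simp only [M, r, s, shift, Matrix.sub_apply, of_apply, vecMulVec_apply]
  field_simp
  linear_combination S.p i * S.q j * hΦ

lemma a_shift (hD : D.SpectralRegular α) (hd : D.DirectionRegular d) (hS : S.Regular D α)
    (hSd : (S.shift D d).Regular D α) :
    (S.shift D d).a D α = D.L.Phi d α • S.a D α - D.L.Phi (S.x + d) α • S.r D := by
  ext i
  have hΦ := EllLattice.Phi_add_mul_Phi_neg hS.x_notMem hd.notMem hSd.x_notMem (hD.κ_notMem i)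
    hD.α_notMem (hD.κ_add_α_notMem i)
  simp only [a, r, shift, Pi.sub_apply, Pi.smul_apply, smul_eq_mul]
  linear_combination S.p i * hΦ

lemma A_shift (hD : D.SpectralRegular α) (hd : D.DirectionRegular d) (hS : S.Regular D α)
    (hSd : (S.shift D d).Regular D α) :
    (S.shift D d).A D = S.A D - vecMulVec (S.r D) ((S.shift D d).b D) := by
  rw [A, A, b, M_shift hD hd hS hSd, Matrix.sub_mul, vecMulVec_mul, add_sub_assoc]

lemma u_shift (hD : D.SpectralRegular α) (hd : D.DirectionRegular d) (hS : S.Regular D α)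
    (hSd : (S.shift D d).Regular D α) :
    (S.shift D d).u D α = D.L.Phi d α • S.u D α - (S.shift D d).V D α • S.u₀ D := by
  rw [u, inv_mulVec_of_eq_sub_vecMulVec hS.isUnit_det hSd.isUnit_det (A_shift hD hd hS hSd),
    ← u, a_shift hD hd hS hSd, mulVec_sub, mulVec_smul, mulVec_smul, ← u, ← u₀, V]
  simp only [shift]
  module

lemma Phi_shift_mul_Phi_sub (hd : D.DirectionRegular d) (he : D.DirectionRegular e)
    (hSd : (S.shift D d).Regular D α) (hSe : (S.shift D e).Regular D α)
    (hSde : ((S.shift D d).shift D e).Regular D α) {k : ℂ} (hk : k ∉ D.L.lattice)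
    (hkx : k + (S.x + d + e) ∉ D.L.lattice) :
    D.L.Phi (S.x + d) k * D.L.Phi e k - D.L.Phi (S.x + e) k * D.L.Phi d k =
      D.L.Phi (S.x + d + e) k *
        (D.L.zeta (S.x + d) + D.L.zeta e - D.L.zeta (S.x + e) - D.L.zeta d) :=
  EllLattice.Phi_mul_Phi_sub_Phi_mul_Phi hSd.x_notMem he.notMem hSe.x_notMem hd.notMem hk
    hSde.x_notMem (by rwa [← add_assoc] at hkx) (add_right_comm _ _ _)

lemma b_shift_sub_b_shift (hD : D.SpectralRegular α) (hd : D.DirectionRegular d)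
    (he : D.DirectionRegular e) (hSd : (S.shift D d).Regular D α) (hSe : (S.shift D e).Regular D α)
    (hSde : ((S.shift D d).shift D e).Regular D α) :
    (S.shift D d).b D - (S.shift D e).b D =
      (D.L.zeta (S.x + d) + D.L.zeta e - D.L.zeta (S.x + e) - D.L.zeta d) •
        ((S.shift D d).shift D e).b D := by
  rw [b, b, b, ← sub_vecMul, ← smul_vecMul]
  congr 1
  ext j
  have hΦ := Phi_shift_mul_Phi_sub hd he hSd hSe hSde (hD.κ'_notMem j) (hSde.κ'_add_x_notMem j)
  have hned := hd.Phi_κ'_ne_zero hD j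
  have hnee := he.Phi_κ'_ne_zero hD j
  simp only [s, shift, Pi.sub_apply, Pi.smul_apply, smul_eq_mul] at hΦ ⊢
  field_simp
  linear_combination S.q j * hΦ

lemma Phi_mul_V_shift_sub (hD : D.SpectralRegular α) (hd : D.DirectionRegular d)
    (he : D.DirectionRegular e) (hSd : (S.shift D d).Regular D α) (hSe : (S.shift D e).Regular D α)
    (hSde : ((S.shift D d).shift D e).Regular D α) :
    D.L.Phi d α * (S.shift D e).V D α - D.L.Phi e α * (S.shift D d).V D α =
      ((S.shift D d).shift D e).V D α *
        (D.L.zeta d + (S.shift D d).potential D - (D.L.zeta e + (S.shift D e).potential D)) := by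
  set T := (S.shift D d).shift D e
  have hT' : T = (S.shift D e).shift D d := shift_comm D e d S
  have hΦ := Phi_shift_mul_Phi_sub hd he hSd hSe hSde hD.α_notMem hSde.α_add_x_notMem
  have hb := congrArg (· ⬝ᵥ T.u D α) (b_shift_sub_b_shift hD hd he hSd hSe hSde)
  have hud := congrArg ((S.shift D d).b D ⬝ᵥ ·) (u_shift hD he hSd hSde)
  have hue := congrArg ((S.shift D e).b D ⬝ᵥ ·) (u_shift hD hd hSe (hT' ▸ hSde))
  simp only [← hT', sub_dotProduct, smul_dotProduct, dotProduct_sub, dotProduct_smul,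
    smul_eq_mul] at hΦ hb hud hue
  have hTx : T.x = S.x + d + e := rfl
  simp only [V, potential, hTx, shift_x] at hud hue ⊢
  linear_combination -hΦ + hb - hud + hue

theorem lattice_mKP (hD : D.SpectralRegular α) (hd : D.DirectionRegular d)
    (he : D.DirectionRegular e) (hl : D.DirectionRegular l) (hSd : (S.shift D d).Regular D α)
    (hSe : (S.shift D e).Regular D α) (hSl : (S.shift D l).Regular D α)
    (hSde : ((S.shift D d).shift D e).Regular D α) (hSel : ((S.shift D e).shift D l).Regular D α)
    (hSld : ((S.shift D l).shift D d).Regular D α)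
    (hVde : ((S.shift D d).shift D e).V D α ≠ 0) (hVel : ((S.shift D e).shift D l).V D α ≠ 0)
    (hVld : ((S.shift D l).shift D d).V D α ≠ 0) :
    (D.L.Phi d α * (S.shift D e).V D α - D.L.Phi e α * (S.shift D d).V D α) /
        ((S.shift D d).shift D e).V D α +
      (D.L.Phi e α * (S.shift D l).V D α - D.L.Phi l α * (S.shift D e).V D α) /
        ((S.shift D e).shift D l).V D α +
      (D.L.Phi l α * (S.shift D d).V D α - D.L.Phi d α * (S.shift D l).V D α) /
        ((S.shift D l).shift D d).V D α = 0 := by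
  rw [Phi_mul_V_shift_sub hD hd he hSd hSe hSde, Phi_mul_V_shift_sub hD he hl hSe hSl hSel,
    Phi_mul_V_shift_sub hD hl hd hSl hSd hSld, mul_div_cancel_left₀ _ hVde,
    mul_div_cancel_left₀ _ hVel, mul_div_cancel_left₀ _ hVld]
  ring

end KPState

namespace EllLattice

lemma exp_mul_Psi (L : EllLattice) (x k : ℂ) :
    Complex.exp (L.zeta x * k) * L.Psi x k = L.Phi x k := by
  rw [Psi, mul_left_comm, ← Complex.exp_add, neg_mul, add_neg_cancel, Complex.exp_zero, mul_one]

lemma exp_neg_mul_Psi_neg (L : EllLattice) (x k : ℂ) :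
    Complex.exp (-L.zeta x * k) * L.Psi x (-k) = L.Phi x (-k) := by
  rw [neg_mul_comm, exp_mul_Psi]

end EllLattice

namespace KPData

variable {N N' : ℕ}

/-- The state at the lattice point `(n, m, h)`. -/
def state (D : KPData N N') (n m h : ℤ) : KPState N N' where
  x := D.xi n m h
  p i := D.L.Phi D.del (-D.κ i) ^ n * D.L.Phi D.eps (-D.κ i) ^ m * D.L.Phi D.lam (-D.κ i) ^ h *
    D.ρ0 i
  q j := D.L.Phi D.del (D.κ' j) ^ (-n) * D.L.Phi D.eps (D.κ' j) ^ (-m) *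
    D.L.Phi D.lam (D.κ' j) ^ (-h) * D.ν0 j

section Gauge

variable (D : KPData N N') (n m h : ℤ)

lemma state_x : (D.state n m h).x = D.xi n m h := rfl

lemma ρ_eq (i : Fin N) :
    D.ρ i n m h = (D.state n m h).p i * Complex.exp (D.L.zeta (D.xi n m h) * D.κ i) := by
  simp only [ρ, state, EllLattice.exp_neg_mul_Psi_neg]
  ring

lemma ν_eq (j : Fin N') :
    D.ν j n m h = (D.state n m h).q j * Complex.exp (D.L.zeta (D.xi n m h) * D.κ' j) := by
  simp only [ν, state, EllLattice.exp_mul_Psi]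
  ring

lemma r_eq : D.r n m h = (D.state n m h).r D := by
  ext i
  rw [r, ρ_eq, mul_assoc, EllLattice.exp_mul_Psi, KPState.r, state_x]

lemma s_eq : D.s n m h = (D.state n m h).s D := by
  ext j
  rw [s, ν_eq, mul_assoc, EllLattice.exp_mul_Psi, KPState.s, state_x]

lemma M_eq : D.M n m h = (D.state n m h).M D := by
  ext i j
  rw [M, KPState.M, of_apply, of_apply, ρ_eq, ν_eq, state_x, ← EllLattice.exp_mul_Psi, mul_add,
    Complex.exp_add]
  ring

end Gauge

section Generic

variable {D : KPData N N'} {α : ℂ}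

lemma Generic.notMem (hgen : D.Generic ![α]) (c0 cn cm ch : ℤ) (a : Fin N → ℤ) (b : Fin N' → ℤ)
    (t : ℤ) (hc : ¬(c0 = 0 ∧ cn = 0 ∧ cm = 0 ∧ ch = 0 ∧ a = 0 ∧ b = 0 ∧ t = 0)) {z : ℂ}
    (hz : z = c0 • D.xi0 + cn • D.del + cm • D.eps + ch • D.lam + (∑ i, a i • D.κ i) +
      (∑ j, b j • D.κ' j) + t • α) : z ∉ D.L.lattice := by
  rw [EllLattice.mem_lattice, hz]
  simpa using hgen c0 cn cm ch a b ![t] (by simpa using hc)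

lemma Generic.spectralRegular (hgen : D.Generic ![α]) : D.SpectralRegular α where
  κ_notMem i := hgen.notMem 0 0 0 0 (Pi.single i 1) 0 0 (by simp) (by simp [Pi.single_apply])
  κ'_notMem j := hgen.notMem 0 0 0 0 0 (Pi.single j 1) 0 (by simp) (by simp [Pi.single_apply])
  α_notMem := hgen.notMem 0 0 0 0 0 0 1 (by simp) (by simp)
  κ_add_κ'_notMem i j := hgen.notMem 0 0 0 0 (Pi.single i 1) (Pi.single j 1) 0 (by simp)
    (by simp [Pi.single_apply])
  κ_add_α_notMem i := hgen.notMem 0 0 0 0 (Pi.single i 1) 0 1 (by simp) (by simp [Pi.single_apply])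

lemma Generic.directionRegular (hgen : D.Generic ![α]) {cn cm ch : ℤ}
    (hc : ¬(cn = 0 ∧ cm = 0 ∧ ch = 0)) {d : ℂ}
    (hd : d = cn • D.del + cm • D.eps + ch • D.lam) : D.DirectionRegular d where
  notMem := hgen.notMem 0 cn cm ch 0 0 0 (by simpa using hc) (by simp [hd])
  add_neg_κ_notMem i := hgen.notMem 0 cn cm ch (Pi.single i (-1)) 0 0 (by simp)
    (by simp [hd, Pi.single_apply])
  add_κ'_notMem j := hgen.notMem 0 cn cm ch 0 (Pi.single j 1) 0 (by simp)
    (by simp [hd, Pi.single_apply])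

lemma Generic.xi_notMem (hgen : D.Generic ![α]) (n m h : ℤ) : D.xi n m h ∉ D.L.lattice :=
  hgen.notMem 1 n m h 0 0 0 (by simp) (by simp [xi])

lemma Generic.state_regular (hgen : D.Generic ![α]) {n m h : ℤ}
    (hInv : IsUnit (1 + D.M n m h * D.C).det) : (D.state n m h).Regular D α where
  x_notMem := hgen.xi_notMem n m h
  κ'_add_x_notMem j := hgen.notMem 1 n m h 0 (Pi.single j 1) 0 (by simp)
    (by simp [state, xi, Pi.single_apply, add_comm])
  α_add_x_notMem := hgen.notMem 1 n m h 0 0 1 (by simp) (by simp [state, xi, add_comm])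
  isUnit_det := by rwa [KPState.A, ← M_eq]

lemma Generic.inv_DK_mulVec_r (hgen : D.Generic ![α]) {n m h : ℤ}
    (hχ : ∀ i, D.L.chi α (D.κ i) (D.xi n m h) ≠ 0) :
    D.L.Phi (D.xi n m h) α • ((D.DK α n m h)⁻¹ *ᵥ D.r n m h) = (D.state n m h).a D α := by
  have hdet : IsUnit (D.DK α n m h).det := by
    rw [DK, det_diagonal, isUnit_iff_ne_zero]
    exact Finset.prod_ne_zero_iff.2 fun i _ => hχ i
  have hDK : D.L.Phi (D.xi n m h) α • D.r n m h = D.DK α n m h *ᵥ (D.state n m h).a D α := by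
    ext i
    have hD := hgen.spectralRegular
    have hΦ := EllLattice.Phi_mul_Phi (hgen.xi_notMem n m h) hD.α_notMem (hD.κ_notMem i)
      (add_comm (D.κ i) α ▸ hD.κ_add_α_notMem i) (hgen.notMem 1 n m h (Pi.single i 1) 0 1 (by simp)
        (by simp [xi, Pi.single_apply, add_right_comm]))
    simp only [r_eq, DK, mulVec_diagonal, KPState.a, KPState.r, Pi.smul_apply, smul_eq_mul, state_x,
      add_comm (D.κ i)]
    linear_combination (D.state n m h).p i * hΦ
  rw [← mulVec_smul, hDK, mulVec_mulVec, nonsing_inv_mul _ hdet, one_mulVec]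

lemma Generic.calV_eq (hgen : D.Generic ![α]) {n m h : ℤ}
    (hInv : IsUnit (1 + D.M n m h * D.C).det)
    (hχ : ∀ i, D.L.chi α (D.κ i) (D.xi n m h) ≠ 0) :
    D.calV α n m h = (D.state n m h).V D α := by
  rw [calV, V, mul_sub, mul_one, mulVec_mulVec, inv_one_add_mul_mul_comm hInv, ← mulVec_mulVec,
    dotProduct_mulVec, ← smul_eq_mul, ← dotProduct_smul, ← mulVec_smul, hgen.inv_DK_mulVec_r hχ,
    M_eq, s_eq]
  rfl

end Generic

section Shift

variable {D : KPData N N'} {α : ℂ}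

lemma state_add_one_del (hD : D.SpectralRegular α) (hd : D.DirectionRegular D.del) (n m h : ℤ) :
    D.state (n + 1) m h = (D.state n m h).shift D D.del := by
  ext i
  · simp only [state, KPState.shift, xi, add_one_zsmul]
    ring
  · simp only [state, KPState.shift, zpow_add_one₀ (hd.Phi_neg_κ_ne_zero hD i)]
    ring
  · simp only [state, KPState.shift, neg_add, zpow_add₀ (hd.Phi_κ'_ne_zero hD i),
      _root_.zpow_neg_one]
    ring

lemma state_add_one_eps (hD : D.SpectralRegular α) (he : D.DirectionRegular D.eps) (n m h : ℤ) :
    D.state n (m + 1) h = (D.state n m h).shift D D.eps := by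
  ext i
  · simp only [state, KPState.shift, xi, add_one_zsmul]
    ring
  · simp only [state, KPState.shift, zpow_add_one₀ (he.Phi_neg_κ_ne_zero hD i)]
    ring
  · simp only [state, KPState.shift, neg_add, zpow_add₀ (he.Phi_κ'_ne_zero hD i),
      _root_.zpow_neg_one]
    ring

lemma state_add_one_lam (hD : D.SpectralRegular α) (hl : D.DirectionRegular D.lam) (n m h : ℤ) :
    D.state n m (h + 1) = (D.state n m h).shift D D.lam := by
  ext i
  · simp only [state, KPState.shift, xi, add_one_zsmul]
    ring
  · simp only [state, KPState.shift, zpow_add_one₀ (hl.Phi_neg_κ_ne_zero hD i)]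
    ring
  · simp only [state, KPState.shift, neg_add, zpow_add₀ (hl.Phi_κ'_ne_zero hD i),
      _root_.zpow_neg_one]
    ring

end Shift

end KPData

/-- Elliptic soliton solution of the lattice modified KP equation:
with `P_α = Φ_δ(α)`, `Q_α = Φ_ε(α)`, `L_α = Φ_λ(α)`, the gauge variable
`𝒱_α = Φ_ξ(α)·V_α` satisfies
`(P𝒱̂ − Q𝒱̃)/𝒱̂̃ + (Q𝒱̄ − L𝒱̂)/𝒱̂̄ + (L𝒱̃ − P𝒱̄)/𝒱̃̄ = 0`. -/
theorem elliptic_soliton_lattice_mKP {N N' : ℕ} (D : KPData N N') (α : ℂ)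
    (hρ0 : ∀ i, D.ρ0 i ≠ 0) (hν0 : ∀ j, D.ν0 j ≠ 0)
    (hgen : D.Generic ![α])
    (hInv : ∀ n m h : ℤ, IsUnit ((1 + D.M n m h * D.C).det))
    (hχα : ∀ (n m h : ℤ) (i : Fin N), D.L.chi α (D.κ i) (D.xi n m h) ≠ 0) :
    ∀ n m h : ℤ,
      D.calV α (n + 1) (m + 1) h ≠ 0 →
      D.calV α n (m + 1) (h + 1) ≠ 0 →
      D.calV α (n + 1) m (h + 1) ≠ 0 →
      (D.L.Phi D.del α * D.calV α n (m + 1) h -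
          D.L.Phi D.eps α * D.calV α (n + 1) m h) / D.calV α (n + 1) (m + 1) h +
      (D.L.Phi D.eps α * D.calV α n m (h + 1) -
          D.L.Phi D.lam α * D.calV α n (m + 1) h) / D.calV α n (m + 1) (h + 1) +
      (D.L.Phi D.lam α * D.calV α (n + 1) m h -
          D.L.Phi D.del α * D.calV α n m (h + 1)) / D.calV α (n + 1) m (h + 1) = 0 := by
  intro n m h hVde hVel hVld
  have hD := hgen.spectralRegular
  have hd : D.DirectionRegular D.del :=
    hgen.directionRegular (cn := 1) (cm := 0) (ch := 0) (by simp) (by simp)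
  have he : D.DirectionRegular D.eps :=
    hgen.directionRegular (cn := 0) (cm := 1) (ch := 0) (by simp) (by simp)
  have hl : D.DirectionRegular D.lam :=
    hgen.directionRegular (cn := 0) (cm := 0) (ch := 1) (by simp) (by simp)
  have hreg (n m h : ℤ) : (D.state n m h).Regular D α := hgen.state_regular (hInv n m h)
  have hV (n m h : ℤ) : D.calV α n m h = (D.state n m h).V D α :=
    hgen.calV_eq (hInv n m h) (hχα n m h)
  have hmKP := KPState.lattice_mKP (S := D.state n m h) hD hd he hl
  simp only [← KPData.state_add_one_del hD hd, ← KPData.state_add_one_eps hD he,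
    ← KPData.state_add_one_lam hD hl, ← hV] at hmKP
  exact hmKP (hreg _ _ _) (hreg _ _ _) (hreg _ _ _) (hreg _ _ _) (hreg _ _ _) (hreg _ _ _)
    hVde hVel hVld
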